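/- There is an absolute constant c > 0 such that, for all sufficiently large n and every 1 ≤ k ≤ n, the half-lazy k-column transvection walk satisfies τ_mix(Q_{n,k}) ≥ c·max( n·log n , n·k / log(e·n) ). -/

import Mathlib

open Finset

noncomputable section

def tvDist {X : Type*} [Fintype X] (f g : X → ℝ) : ℝ := (1/2) * ∑ x, |f x - g x|

open Classical in
def unifOn {X : Type*} [Fintype X] (G : Set X) : X → ℝ :=
  fun x => if x ∈ G then (Nat.card G : ℝ)⁻¹ else 0

def mixTime {X : Type*} [Fintype X] [DecidableEq X] (Q : Matrix X X ℝ) (π : X → ℝ)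
    (start : Set X) : ℕ :=
  sInf {t : ℕ | ∀ x ∈ start, tvDist ((Q ^ t) x) π ≤ 1 / 4}

abbrev TState (n k : ℕ) := Fin n → (Fin k → ZMod 2)

def Stief (n k : ℕ) : Set (TState n k) :=
  {z | Submodule.span (ZMod 2) (Set.range z) = ⊤}

def transP (n k : ℕ) : Matrix (TState n k) (TState n k) ℝ :=
  fun z w => (∑ a : Fin n, ∑ b : Fin n,
    if a ≠ b ∧ w = Function.update z b (z b + z a) then (1 : ℝ) else 0) / ((n : ℝ) * ((n : ℝ) - 1))

def transQ (n k : ℕ) : Matrix (TState n k) (TState n k) ℝ :=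
  (2⁻¹ : ℝ) • ((1 : Matrix (TState n k) (TState n k) ℝ) + transP n k)

/-!
Both lower bounds come from starting the walk at the matrix whose rows are the standard basis
vectors followed by zeros.

* A transvection adds at most one nonzero entry to a given column, and only if the added row is
  nonzero there, so the expected weight of the column grows by a factor of at most `1 + 1 / (2 n)`
  per step. It starts at `1`, whereas at stationarity it is at least `n / 2`; hence `n log n` steps.
* At most `n ^ 2` states are reached in one step, so at most `n ^ (2 t)` in `t` steps,
  whereas there are at least `2 ^ ((n - 1) k)` states in all; hence `n k / log n` steps.

Since `mixTime` is an infimum of natural numbers, which is `0` on the empty set, one also needs that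
the walk mixes at all. Over `ZMod 2` transvections generate `GL_n`, which acts transitively on
`Stief n k`, so some power of the half-lazy kernel is positive on `Stief n k` and therefore, by
Doeblin's argument, contracts total variation.
-/

open Matrix

section TotalVariation

variable {X : Type*} [Fintype X] {μ ν f : X → ℝ} {S : Set X}

lemma tvDist_le_one (hμ : μ ∈ stdSimplex ℝ X) (hν : ν ∈ stdSimplex ℝ X) : tvDist μ ν ≤ 1 := by
  have hle (x : X) : |μ x - ν x| ≤ μ x + ν x :=
    abs_le.2 ⟨by linarith [hμ.1 x], by linarith [hν.1 x]⟩
  calc tvDist μ ν ≤ 1 / 2 * ∑ x, (μ x + ν x) := by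
        unfold tvDist
        gcongr with x
        exact hle x
    _ = 1 := by rw [sum_add_distrib, hμ.2, hν.2]; norm_num

-- Centring the test function at `1 / 2` costs nothing, as `μ` and `ν` have the same mass.
lemma dotProduct_sub_dotProduct_le_tvDist (h : ∑ x, μ x = ∑ x, ν x)
    (hf : ∀ x, f x ∈ Set.Icc 0 1) : ν ⬝ᵥ f - μ ⬝ᵥ f ≤ tvDist μ ν := by
  have hcentre : ν ⬝ᵥ f - μ ⬝ᵥ f = ∑ x, (f x - 1 / 2) * (ν x - μ x) := by
    simp only [dotProduct, sub_mul, mul_sub, sum_sub_distrib, ← mul_sum, h, mul_comm (f _)]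
    ring
  have habs (x : X) : |f x - 1 / 2| ≤ 1 / 2 :=
    abs_le.2 ⟨by linarith [(hf x).1], by linarith [(hf x).2]⟩
  rw [hcentre, tvDist, mul_sum]
  refine sum_le_sum fun x _ => (le_abs_self _).trans ?_
  rw [abs_mul, abs_sub_comm (ν x)]
  exact mul_le_mul_of_nonneg_right (habs x) (abs_nonneg _)

open Classical in
lemma unifOn_dotProduct (S : Set X) (f : X → ℝ) :
    unifOn S ⬝ᵥ f = (∑ x with x ∈ S, f x) / Nat.card S := by
  simp only [dotProduct, unifOn, ite_mul, zero_mul, ← sum_filter, inv_mul_eq_div, sum_div]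

open Classical in
lemma natCard_eq_card_filter_mem (S : Set X) : Nat.card S = #{x | x ∈ S} := by
  rw [Nat.card_eq_fintype_card, Fintype.card_subtype]

lemma unifOn_mem_stdSimplex (hS : S.Nonempty) : unifOn S ∈ stdSimplex ℝ X := by
  classical
  refine ⟨fun x => by unfold unifOn; split_ifs <;> positivity, ?_⟩
  have hsum := unifOn_dotProduct S 1
  rwa [dotProduct_one, sum_congr rfl fun x _ => Pi.one_apply x, sum_const, nsmul_one,
    ← natCard_eq_card_filter_mem, div_self (mod_cast hS.natCard_pos S.toFinite |>.ne')] at hsum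

-- The test function is the indicator of the complement of the support of `μ`.
lemma one_sub_card_support_div_le_tvDist (hμ : ∑ x, μ x = 1) (hS : S.Nonempty) :
    1 - (#{x | μ x ≠ 0} : ℝ) / Nat.card S ≤ tvDist μ (unifOn S) := by
  classical
  have hS_pos : (0 : ℝ) < Nat.card S := mod_cast hS.natCard_pos S.toFinite
  have htest := dotProduct_sub_dotProduct_le_tvDist (f := fun x => if μ x = 0 then 1 else 0)
    (hμ.trans (unifOn_mem_stdSimplex hS).2.symm) (fun x => by split_ifs <;> simp)
  have hμ_zero : μ ⬝ᵥ (fun x => if μ x = 0 then 1 else 0) = 0 :=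
    sum_eq_zero fun x _ => by simp
  rw [hμ_zero, sub_zero, unifOn_dotProduct, sum_boole, filter_filter] at htest
  refine le_trans ?_ htest
  rw [one_sub_div hS_pos.ne']
  gcongr
  rw [sub_le_iff_le_add, natCard_eq_card_filter_mem]
  norm_cast
  rw [← card_filter_add_card_filter_not (s := {x | x ∈ S}) (fun x => μ x = 0), filter_filter,
    filter_filter]
  gcongr
  exact And.right

end TotalVariation

section FiniteKernel

variable {X : Type*} [Fintype X] {Q P : Matrix X X ℝ} {S : Set X} {π μ ν : X → ℝ}

/-- The set `S` is absorbing (closed) for the kernel `Q`: a chain with transitions `Q` started in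
`S` never leaves `S`. -/
def IsAbsorbing (Q : Matrix X X ℝ) (S : Set X) : Prop :=
  ∀ x ∈ S, ∀ y ∉ S, Q x y = 0

lemma exists_minorization (hP : ∀ x y, 0 ≤ P x y) (hpos : ∀ x ∈ S, ∀ y ∈ S, 0 < P x y)
    (hπ : π ∈ stdSimplex ℝ X) (hπS : ∀ y ∉ S, π y = 0) :
    ∃ δ > 0, ∀ x ∈ S, ∀ y, δ * π y ≤ P x y := by
  obtain ⟨⟨δ, hδ⟩, hδP⟩ := Finite.exists_ge fun p : S × S =>
    (⟨P p.1 p.2, hpos p.1 p.1.2 p.2 p.2.2⟩ : {r : ℝ // 0 < r})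
  refine ⟨δ, hδ, fun x hx y => ?_⟩
  by_cases hy : y ∈ S
  · have hπ_le : π y ≤ 1 := hπ.2 ▸ single_le_sum (fun z _ => hπ.1 z) (mem_univ y)
    exact (mul_le_of_le_one_right hδ.le hπ_le).trans (hδP (⟨x, hx⟩, ⟨y, hy⟩))
  · rw [hπS y hy, mul_zero]
    exact hP x y

variable [DecidableEq X]

lemma IsAbsorbing.pow (hS : IsAbsorbing Q S) (t : ℕ) : IsAbsorbing (Q ^ t) S := by
  induction t with
  | zero => exact fun x hx y hy => one_apply_ne (ne_of_mem_of_not_mem hx hy)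
  | succ t ih =>
    intro x hx y hy
    rw [pow_succ, mul_apply]
    refine sum_eq_zero fun w _ => ?_
    by_cases hw : w ∈ S
    · rw [hS w hw y hy, mul_zero]
    · rw [ih x hx w hw, zero_mul]

lemma row_mem_stdSimplex (hQ : Q ∈ rowStochastic ℝ X) (x : X) : Q x ∈ stdSimplex ℝ X :=
  ⟨fun _ => nonneg_of_mem_rowStochastic hQ, sum_row_of_mem_rowStochastic hQ x⟩

lemma pow_mulVec_le {f : X → ℝ} {c : ℝ} (hQ : ∀ x y, 0 ≤ Q x y) (hc : 0 ≤ c)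
    (hf : ∀ x, (Q *ᵥ f) x ≤ c * f x) (t : ℕ) (x : X) : (Q ^ t *ᵥ f) x ≤ c ^ t * f x := by
  induction t with
  | zero => simp
  | succ t ih =>
    calc (Q ^ (t + 1) *ᵥ f) x = ∑ y, (Q ^ t) x y * (Q *ᵥ f) y := by
          rw [pow_succ, ← mulVec_mulVec]; rfl
      _ ≤ ∑ y, (Q ^ t) x y * (c * f y) := by
          gcongr with y
          · exact pow_apply_nonneg hQ t x y
          · exact hf y
      _ = c * (Q ^ t *ᵥ f) x := by
          simp only [mulVec, dotProduct, mul_sum, mul_left_comm]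
      _ ≤ c * (c ^ t * f x) := by gcongr
      _ = c ^ (t + 1) * f x := by ring

lemma card_row_support_pow_le {R : Type*} [Semiring R] [DecidableEq R] {Q : Matrix X X R} {d : ℕ}
    (hd : ∀ x, #{y | Q x y ≠ 0} ≤ d) (t : ℕ) (x : X) : #{y | (Q ^ t) x y ≠ 0} ≤ d ^ t := by
  induction t with
  | zero => exact card_le_one.2 fun y hy z hz => by simp_all [one_apply]
  | succ t ih =>
    have hsub : ({y | (Q ^ (t + 1)) x y ≠ 0} : Finset X) ⊆
        ({w | (Q ^ t) x w ≠ 0} : Finset X).biUnion fun w => {y | Q w y ≠ 0} := by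
      intro y hy
      rw [mem_filter_univ, pow_succ, mul_apply] at hy
      obtain ⟨w, -, hw⟩ := exists_ne_zero_of_sum_ne_zero hy
      simp only [mem_biUnion, mem_filter_univ]
      exact ⟨w, left_ne_zero_of_mul hw, right_ne_zero_of_mul hw⟩
    calc #{y | (Q ^ (t + 1)) x y ≠ 0} ≤ #{w | (Q ^ t) x w ≠ 0} * d :=
          (card_le_card hsub).trans (card_biUnion_le_card_mul _ _ d fun w _ => hd w)
      _ ≤ d ^ (t + 1) := by rw [pow_succ]; gcongr

lemma unifOn_vecMul_of_isSymm (hQ : Q ∈ rowStochastic ℝ X) (hsymm : Q.IsSymm)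
    (hS : IsAbsorbing Q S) : unifOn S ᵥ* Q = unifOn S := by
  have hdetailed (x y : X) : unifOn S x * Q x y = unifOn S y * Q y x := by
    rw [hsymm.apply x y]
    by_cases hx : x ∈ S <;> by_cases hy : y ∈ S
    · simp only [unifOn, hx, hy]
    · rw [hS x hx y hy, mul_zero, mul_zero]
    · rw [← hsymm.apply x y, hS y hy x hx, mul_zero, mul_zero]
    · simp only [unifOn, hx, hy]
  ext y
  simp only [vecMul, dotProduct, hdetailed _ y, ← mul_sum, sum_row_of_mem_rowStochastic hQ,
    mul_one]

lemma pow_succ_apply_pos (hQ : ∀ x y, 0 ≤ Q x y) {t : ℕ} {x y z : X} (hxy : 0 < (Q ^ t) x y)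
    (hyz : 0 < Q y z) : 0 < (Q ^ (t + 1)) x z := by
  rw [pow_succ, mul_apply]
  exact sum_pos' (fun w _ => mul_nonneg (pow_apply_nonneg hQ t x w) (hQ w z))
    ⟨y, mem_univ y, mul_pos hxy hyz⟩

lemma pow_apply_pos_of_le (hQ : ∀ x y, 0 ≤ Q x y) (hlazy : ∀ x, 0 < Q x x) {s t : ℕ}
    (hst : s ≤ t) {x y : X} (hxy : 0 < (Q ^ s) x y) : 0 < (Q ^ t) x y := by
  induction t, hst using Nat.le_induction with
  | base => exact hxy
  | succ t _ ih => exact pow_succ_apply_pos hQ ih (hlazy y)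

lemma exists_pow_apply_pos_of_reflTransGen (hQ : ∀ x y, 0 ≤ Q x y) {x y : X}
    (hxy : Relation.ReflTransGen (fun u v => 0 < Q u v) x y) : ∃ t, 0 < (Q ^ t) x y := by
  induction hxy with
  | refl => exact ⟨0, by simp⟩
  | tail _ huv ih =>
    obtain ⟨t, ht⟩ := ih
    exact ⟨t + 1, pow_succ_apply_pos hQ ht huv⟩

lemma exists_pow_forall_apply_pos (hQ : ∀ x y, 0 ≤ Q x y) (hlazy : ∀ x, 0 < Q x x)
    (hconn : ∀ x ∈ S, ∀ y ∈ S, Relation.ReflTransGen (fun u v => 0 < Q u v) x y) :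
    ∃ T, ∀ x ∈ S, ∀ y ∈ S, 0 < (Q ^ T) x y := by
  choose τ hτ using fun p : S × S =>
    exists_pow_apply_pos_of_reflTransGen hQ (hconn p.1 p.1.2 p.2 p.2.2)
  obtain ⟨T, hT⟩ := Finite.exists_le τ
  exact ⟨T, fun x hx y hy => pow_apply_pos_of_le hQ hlazy (hT (⟨x, hx⟩, ⟨y, hy⟩)) (hτ _)⟩

-- Doeblin: as `μ - ν` has mass zero, `P x y` may be replaced by the nonnegative kernel
-- `P x y - δ * π y`, whose row sums are `1 - δ`.
lemma tvDist_vecMul_le_of_minorization (hP : P ∈ rowStochastic ℝ X) (hπ : ∑ y, π y = 1) {δ : ℝ}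
    (hδ : ∀ x ∈ S, ∀ y, δ * π y ≤ P x y) (hμS : ∀ x ∉ S, μ x = 0) (hνS : ∀ x ∉ S, ν x = 0)
    (hμν : ∑ x, μ x = ∑ x, ν x) : tvDist (μ ᵥ* P) (ν ᵥ* P) ≤ (1 - δ) * tvDist μ ν := by
  have hresidual (y : X) :
      (μ ᵥ* P) y - (ν ᵥ* P) y = ∑ x, (μ x - ν x) * (P x y - δ * π y) := by
    simp only [vecMul, dotProduct, mul_sub, sum_sub_distrib, sub_mul, ← sum_mul, hμν]
    ring
  have hentry (x y : X) :
      |(μ x - ν x) * (P x y - δ * π y)| = |μ x - ν x| * (P x y - δ * π y) := by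
    by_cases hx : x ∈ S
    · rw [abs_mul, abs_of_nonneg (sub_nonneg.2 (hδ x hx y))]
    · simp [hμS x hx, hνS x hx]
  have hrow (x : X) : ∑ y, (P x y - δ * π y) = 1 - δ := by
    rw [sum_sub_distrib, sum_row_of_mem_rowStochastic hP, ← mul_sum, hπ, mul_one]
  have hl1 : ∑ y, |(μ ᵥ* P) y - (ν ᵥ* P) y| ≤ (1 - δ) * ∑ x, |μ x - ν x| :=
    calc ∑ y, |(μ ᵥ* P) y - (ν ᵥ* P) y|
        ≤ ∑ y, ∑ x, |μ x - ν x| * (P x y - δ * π y) := by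
          gcongr with y
          rw [hresidual, ← sum_congr rfl fun x _ => hentry x y]
          exact abs_sum_le_sum_abs _ _
      _ = (1 - δ) * ∑ x, |μ x - ν x| := by
          rw [sum_comm]
          simp only [← mul_sum, hrow, ← sum_mul]
          exact mul_comm _ _
  unfold tvDist
  linarith

lemma tvDist_pow_le_of_minorization (hP : P ∈ rowStochastic ℝ X) (hS : IsAbsorbing P S)
    (hπ : π ∈ stdSimplex ℝ X) (hπS : ∀ y ∉ S, π y = 0) (hstat : π ᵥ* P = π) {δ : ℝ}
    (hδ : ∀ x ∈ S, ∀ y, δ * π y ≤ P x y) (hδ1 : δ ≤ 1) (m : ℕ) {x : X} (hx : x ∈ S) :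
    tvDist ((P ^ m) x) π ≤ (1 - δ) ^ m := by
  induction m with
  | zero => simpa using tvDist_le_one (row_mem_stdSimplex (pow_mem hP 0) x) hπ
  | succ m ih =>
    calc tvDist ((P ^ (m + 1)) x) π = tvDist ((P ^ m) x ᵥ* P) (π ᵥ* P) := by
          rw [pow_succ, mul_apply_eq_vecMul, hstat]
      _ ≤ (1 - δ) * tvDist ((P ^ m) x) π :=
          tvDist_vecMul_le_of_minorization hP hπ.2 hδ (hS.pow m x hx) hπS
            ((row_mem_stdSimplex (pow_mem hP m) x).2.trans hπ.2.symm)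
      _ ≤ (1 - δ) * (1 - δ) ^ m := mul_le_mul_of_nonneg_left ih (sub_nonneg.2 hδ1)
      _ = (1 - δ) ^ (m + 1) := (pow_succ' _ _).symm

lemma vecMul_pow_eq_self (hstat : π ᵥ* Q = π) (t : ℕ) : π ᵥ* Q ^ t = π := by
  induction t with
  | zero => rw [pow_zero, vecMul_one]
  | succ t ih => rw [pow_succ, ← vecMul_vecMul, ih, hstat]

theorem exists_forall_tvDist_pow_le (hQ : Q ∈ rowStochastic ℝ X) (hS : IsAbsorbing Q S)
    (hlazy : ∀ x, 0 < Q x x)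
    (hconn : ∀ x ∈ S, ∀ y ∈ S, Relation.ReflTransGen (fun u v => 0 < Q u v) x y)
    (hπ : π ∈ stdSimplex ℝ X) (hπS : ∀ y ∉ S, π y = 0) (hstat : π ᵥ* Q = π) {ε : ℝ}
    (hε : 0 < ε) : ∃ t, ∀ x ∈ S, tvDist ((Q ^ t) x) π ≤ ε := by
  obtain ⟨T, hT⟩ := exists_pow_forall_apply_pos hQ.1 hlazy hconn
  obtain ⟨δ, hδ, hδT⟩ := exists_minorization (pow_apply_nonneg hQ.1 T) hT hπ hπS
  obtain ⟨m, hm⟩ := exists_pow_lt_of_lt_one hε (sub_lt_self 1 hδ)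
  refine ⟨T * m, fun x hx => ?_⟩
  have hδ1 : δ ≤ 1 := by
    have hsum := sum_le_sum fun y (_ : y ∈ univ) => hδT x hx y
    rwa [← mul_sum, hπ.2, mul_one, sum_row_of_mem_rowStochastic (pow_mem hQ T)] at hsum
  rw [pow_mul]
  exact (tvDist_pow_le_of_minorization (pow_mem hQ T) (hS.pow T) hπ hπS
    (vecMul_pow_eq_self hstat T) hδT hδ1 m hx).trans hm.le

lemma tvDist_pow_mixTime_le
    (hmix : ∃ t, ∀ x ∈ S, tvDist ((Q ^ t) x) π ≤ 1 / 4) {x : X} (hx : x ∈ S) :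
    tvDist ((Q ^ mixTime Q π S) x) π ≤ 1 / 4 :=
  Nat.sInf_mem (s := {t | ∀ x ∈ S, tvDist ((Q ^ t) x) π ≤ 1 / 4}) hmix x hx

end FiniteKernel

section Transvection

variable {ι V : Type*} [DecidableEq ι]

/-- The family `z^{a→b}`, obtained from `z` by adding the vector `z a` to `z b`. -/
def transvect [Add V] (z : ι → V) (a b : ι) : ι → V :=
  Function.update z b (z b + z a)

lemma transvect_transvect [AddCommGroup V] [Module (ZMod 2) V] (z : ι → V) {a b : ι}
    (hab : a ≠ b) : transvect (transvect z a b) a b = z := by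
  simp [transvect, hab, add_assoc, ZModModule.add_self]

lemma span_range_transvect_le {R : Type*} [Semiring R] [AddCommMonoid V] [Module R V] (z : ι → V)
    (a b : ι) :
    Submodule.span R (Set.range (transvect z a b)) ≤ Submodule.span R (Set.range z) := by
  have hmem (i : ι) : z i ∈ Submodule.span R (Set.range z) := Submodule.subset_span ⟨i, rfl⟩
  rw [Submodule.span_le]
  rintro _ ⟨i, rfl⟩
  obtain rfl | hi := eq_or_ne i b
  · simpa [transvect] using add_mem (hmem i) (hmem a)
  · simpa [transvect, hi] using hmem i

end Transvection

section TransvectionKernel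

variable {n k : ℕ}

lemma transvect_mem_Stief {z : TState n k} {a b : Fin n} (hab : a ≠ b) (hz : z ∈ Stief n k) :
    transvect z a b ∈ Stief n k := by
  have hle := span_range_transvect_le (R := ZMod 2) (transvect z a b) a b
  rw [transvect_transvect z hab, show Submodule.span (ZMod 2) (Set.range z) = ⊤ from hz] at hle
  exact top_le_iff.1 hle

lemma transP_apply (z w : TState n k) :
    transP n k z w =
      (∑ a, ∑ b ∈ {a}ᶜ, if w = transvect z a b then 1 else 0) / ((n : ℝ) * (n - 1)) := by
  unfold transP
  congr 1
  refine sum_congr rfl fun a _ => ?_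
  simp only [ite_and]
  rw [← sum_filter, filter_ne, ← compl_singleton]
  rfl

lemma transP_mulVec (g : TState n k → ℝ) (z : TState n k) :
    (transP n k *ᵥ g) z = (∑ a, ∑ b ∈ {a}ᶜ, g (transvect z a b)) / ((n : ℝ) * (n - 1)) := by
  simp only [mulVec, dotProduct, transP_apply, div_mul_eq_mul_div, ← sum_div, sum_mul]
  rw [sum_comm]
  simp only [sum_comm (s := univ) (t := {_}ᶜ), ite_mul, one_mul, zero_mul, sum_ite_eq', mem_univ,
    if_true]

lemma transP_nonneg (z w : TState n k) : 0 ≤ transP n k z w := by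
  have hden : (0 : ℝ) ≤ n * (n - 1) := by
    obtain rfl | hn := n.eq_zero_or_pos
    · simp
    · exact mul_nonneg n.cast_nonneg (sub_nonneg.2 (mod_cast hn))
  rw [transP_apply]
  positivity

lemma transP_isSymm (n k : ℕ) : (transP n k).IsSymm := by
  refine IsSymm.ext fun z w => ?_
  rw [transP_apply, transP_apply]
  congr 1
  refine sum_congr rfl fun a _ => sum_congr rfl fun b hb => if_congr ?_ rfl rfl
  have hab : a ≠ b := by simpa [eq_comm] using hb
  constructor
  · rintro rfl; exact (transvect_transvect w hab).symm
  · rintro rfl; exact (transvect_transvect z hab).symm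

lemma transQ_isSymm (n k : ℕ) : (transQ n k).IsSymm :=
  (isSymm_one.add (transP_isSymm n k)).smul _

lemma transQ_apply (z w : TState n k) :
    transQ n k z w = 2⁻¹ * ((if z = w then 1 else 0) + transP n k z w) := by
  simp [transQ, one_apply]

lemma transQ_mulVec (g : TState n k → ℝ) (z : TState n k) :
    (transQ n k *ᵥ g) z =
      2⁻¹ * (g z + (∑ a, ∑ b ∈ {a}ᶜ, g (transvect z a b)) / ((n : ℝ) * (n - 1))) := by
  rw [← transP_mulVec, transQ, smul_mulVec, add_mulVec, one_mulVec]
  rfl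

lemma sum_sum_compl_singleton (h : Fin n → ℝ) :
    ∑ a, ∑ _b ∈ ({a} : Finset (Fin n))ᶜ, h a = (n - 1) * ∑ a, h a := by
  rw [mul_sum]
  refine sum_congr rfl fun a _ => ?_
  rw [sum_const, nsmul_eq_mul, card_compl, card_singleton, Fintype.card_fin, Nat.cast_pred a.pos]

lemma transQ_mem_rowStochastic (hn : 2 ≤ n) (k : ℕ) :
    transQ n k ∈ rowStochastic ℝ (TState n k) := by
  have hn2 : (2 : ℝ) ≤ n := mod_cast hn
  refine ⟨fun z w => ?_, funext fun z => ?_⟩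
  · rw [transQ_apply]
    have := transP_nonneg z w
    positivity
  · have hn0 : (n : ℝ) ≠ 0 := by linarith
    have hn1 : (n : ℝ) - 1 ≠ 0 := by linarith
    rw [transQ_mulVec]
    simp only [Pi.one_apply]
    rw [sum_sum_compl_singleton fun _ => 1, sum_const, card_univ, Fintype.card_fin, nsmul_one]
    field_simp
    norm_num

lemma transQ_self_pos (z : TState n k) : 0 < transQ n k z z := by
  rw [transQ_apply, if_pos rfl]
  linarith [transP_nonneg z z]

lemma transQ_transvect_pos (z : TState n k) {a b : Fin n} (hab : a ≠ b) :
    0 < transQ n k z (transvect z a b) := by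
  have hn : (1 : ℝ) < n := by
    have := Fin.val_ne_of_ne hab
    exact_mod_cast (by omega : 1 < n)
  have hP : 0 < transP n k z (transvect z a b) := by
    rw [transP_apply]
    refine div_pos ?_ (mul_pos (by linarith) (by linarith))
    refine sum_pos' (fun _ _ => by positivity) ⟨a, mem_univ a, ?_⟩
    exact sum_pos' (fun _ _ => by positivity) ⟨b, by simpa using hab.symm, by simp⟩
  rw [transQ_apply]
  positivity

lemma eq_or_exists_transvect_of_transQ_ne_zero {z w : TState n k} (h : transQ n k z w ≠ 0) :
    w = z ∨ ∃ a b, a ≠ b ∧ w = transvect z a b := by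
  contrapose! h
  have hP : transP n k z w = 0 := by
    rw [transP_apply, sum_eq_zero fun a _ => sum_eq_zero fun b hb => if_neg (h.2 a b ?_), zero_div]
    simpa [eq_comm] using hb
  rw [transQ_apply, if_neg h.1.symm, hP, add_zero, mul_zero]

lemma isAbsorbing_transQ_Stief (n k : ℕ) : IsAbsorbing (transQ n k) (Stief n k) := by
  intro z hz w hw
  by_contra h
  obtain rfl | ⟨a, b, hab, rfl⟩ := eq_or_exists_transvect_of_transQ_ne_zero h
  · exact hw hz
  · exact hw (transvect_mem_Stief hab hz)

lemma card_transQ_row_support_le (hn : 1 ≤ n) (z : TState n k) :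
    #{w | transQ n k z w ≠ 0} ≤ n ^ 2 := by
  have hsub : ({w | transQ n k z w ≠ 0} : Finset (TState n k)) ⊆
      insert z (univ.offDiag.image fun p => transvect z p.1 p.2) := by
    intro w hw
    obtain rfl | ⟨a, b, hab, rfl⟩ :=
      eq_or_exists_transvect_of_transQ_ne_zero ((mem_filter_univ w).1 hw)
    · exact mem_insert_self _ _
    · exact mem_insert_of_mem (mem_image.2 ⟨(a, b), by simpa using hab, rfl⟩)
  calc #{w | transQ n k z w ≠ 0} ≤ #(univ : Finset (Fin n)).offDiag + 1 :=
        (card_le_card hsub).trans ((card_insert_le _ _).trans (by gcongr; exact card_image_le))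
    _ = n * n - n + 1 := by simp
    _ ≤ n ^ 2 := by rw [sq]; have := Nat.le_mul_self n; omega

end TransvectionKernel

section Connectivity

lemma exists_linearEquiv_apply_eq {K V ι : Type*} [Field K] [AddCommGroup V] [Module K V]
    [Finite ι] {v w : ι → V} (hv : LinearIndependent K v) (hw : LinearIndependent K w) :
    ∃ g : V ≃ₗ[K] V, ∀ i, g (v i) = w i := by
  have : FiniteDimensional K (Submodule.span K (Set.range v)) :=
    FiniteDimensional.span_of_finite K (Set.finite_range v)
  let e := (Module.Basis.span hv).equiv (Module.Basis.span hw) (Equiv.refl ι)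
  obtain ⟨g, hg⟩ := Submodule.exists_linearEquiv_restrict_eq e
  refine ⟨g, fun i => ?_⟩
  have hei : e (Module.Basis.span hv i) = Module.Basis.span hw i := Module.Basis.equiv_apply ..
  have hgi := hg (Module.Basis.span hv i)
  rw [hei, Module.Basis.span_apply, Module.Basis.span_apply] at hgi
  exact hgi.symm

variable {n k : ℕ}

lemma mem_Stief_iff_linearIndependent_flip {z : TState n k} :
    z ∈ Stief n k ↔ LinearIndependent (ZMod 2) (flip z) :=
  span_flip_eq_top_iff_linearIndependent (f := flip z)

lemma exists_det_ne_zero_mul_eq {z w : TState n k} (hz : z ∈ Stief n k) (hw : w ∈ Stief n k) :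
    ∃ M : Matrix (Fin n) (Fin n) (ZMod 2), M.det ≠ 0 ∧ M * of z = of w := by
  obtain ⟨g, hg⟩ := exists_linearEquiv_apply_eq (mem_Stief_iff_linearIndependent_flip.1 hz)
    (mem_Stief_iff_linearIndependent_flip.1 hw)
  refine ⟨LinearMap.toMatrix' g, ?_, ?_⟩
  · rw [LinearMap.det_toMatrix']
    exact g.isUnit_det'.ne_zero
  · ext i j
    have hcol : LinearMap.toMatrix' g *ᵥ flip z j = flip w j := by
      rw [LinearMap.toMatrix'_mulVec]; exact hg j
    exact congrFun hcol i

lemma transvection_mul_of (z : TState n k) (a b : Fin n) :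
    transvection b a (1 : ZMod 2) * of z = of (transvect z a b) := by
  ext i j
  obtain rfl | hi := eq_or_ne i b
  · simp [transvect, transvection_mul_apply_same]
  · simp [transvect, hi, transvection_mul_apply_of_ne]

lemma diagonal_eq_one_of_det_ne_zero {ι : Type*} [Fintype ι] [DecidableEq ι] {D : ι → ZMod 2}
    (hD : (diagonal D).det ≠ 0) : diagonal D = 1 := by
  rw [det_diagonal, prod_ne_zero_iff] at hD
  rw [← diagonal_one]
  exact congrArg diagonal (funext fun i => Fin.eq_one_of_ne_zero _ (hD i (mem_univ i)))

-- An invertible diagonal matrix over `ZMod 2` is the identity, so transvections alone generate the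
-- invertible matrices.
lemma reflTransGen_transQ_of_mul_eq {M : Matrix (Fin n) (Fin n) (ZMod 2)} (hM : M.det ≠ 0)
    {z w : TState n k} (hzw : M * of z = of w) :
    Relation.ReflTransGen (fun u v => 0 < transQ n k u v) z w := by
  revert z w
  refine diagonal_transvection_induction_of_det_ne_zero (fun M => ∀ {z w : TState n k},
    M * of z = of w → Relation.ReflTransGen (fun u v => 0 < transQ n k u v) z w) M hM ?_ ?_ ?_
  · intro D hD z w hzw
    rw [diagonal_eq_one_of_det_ne_zero hD, Matrix.one_mul] at hzw
    rw [of.injective hzw]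
  · rintro ⟨b, a, hba, c⟩ z w hzw
    rw [TransvectionStruct.toMatrix_mk] at hzw
    obtain rfl | rfl := (by decide : ∀ c : ZMod 2, c = 0 ∨ c = 1) c
    · rw [transvection_zero, Matrix.one_mul] at hzw
      rw [of.injective hzw]
    · rw [transvection_mul_of] at hzw
      rw [← of.injective hzw]
      exact .single (transQ_transvect_pos z hba.symm)
  · intro A B _ _ hA hB z w hzw
    rw [Matrix.mul_assoc] at hzw
    exact (hB (w := of.symm (B * of z)) rfl).trans (hA hzw)

lemma reflTransGen_transQ {z w : TState n k} (hz : z ∈ Stief n k) (hw : w ∈ Stief n k) :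
    Relation.ReflTransGen (fun u v => 0 < transQ n k u v) z w := by
  obtain ⟨M, hM, hzw⟩ := exists_det_ne_zero_mul_eq hz hw
  exact reflTransGen_transQ_of_mul_eq hM hzw

lemma exists_forall_tvDist_transQ_pow_le (hn : 2 ≤ n) (hS : (Stief n k).Nonempty) {ε : ℝ}
    (hε : 0 < ε) : ∃ t, ∀ x ∈ Stief n k, tvDist ((transQ n k ^ t) x) (unifOn (Stief n k)) ≤ ε :=
  have hQ := transQ_mem_rowStochastic hn k
  have hclosed := isAbsorbing_transQ_Stief n k
  exists_forall_tvDist_pow_le hQ hclosed transQ_self_pos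
    (fun _ hx _ hy => reflTransGen_transQ hx hy) (unifOn_mem_stdSimplex hS)
    (fun _ hy => if_neg hy) (unifOn_vecMul_of_isSymm hQ (transQ_isSymm n k) hclosed) hε

end Connectivity

section ColumnWeight

variable {n k : ℕ}

/-- The number of nonzero entries in column `j` of the state `z`, viewed as an `n × k` matrix. Its
slow growth along the walk gives the `n log n` lower bound. -/
def colWeight (j : Fin k) (z : TState n k) : ℕ := hammingNorm (flip z j)

lemma colWeight_le (j : Fin k) (z : TState n k) : colWeight j z ≤ n :=
  hammingNorm_le_card_fintype.trans_eq (Fintype.card_fin n)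

lemma colWeight_transvect_le (j : Fin k) (z : TState n k) (a b : Fin n) :
    colWeight j (transvect z a b) ≤ colWeight j z + if z a j ≠ 0 then 1 else 0 := by
  by_cases ha : z a j = 0
  · have hcol : flip (transvect z a b) j = flip z j := by
      ext i
      obtain rfl | hi := eq_or_ne i b <;> simp [flip, transvect, *]
    simp [colWeight, hcol]
  · have hsub : ({i | transvect z a b i j ≠ 0} : Finset (Fin n)) ⊆
        insert b ({i | z i j ≠ 0} : Finset (Fin n)) := by
      intro i hi
      obtain rfl | hib := eq_or_ne i b
      · exact mem_insert_self _ _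
      · rw [mem_filter_univ, transvect, Function.update_of_ne hib] at hi
        exact mem_insert_of_mem ((mem_filter_univ i).2 hi)
    rw [if_pos ha]
    exact (card_le_card hsub).trans (card_insert_le _ _)

lemma transQ_mulVec_colWeight_le (hn : 2 ≤ n) (j : Fin k) (z : TState n k) :
    (transQ n k *ᵥ fun w => (colWeight j w : ℝ)) z ≤ (1 + 1 / (2 * n)) * colWeight j z := by
  have hn2 : (2 : ℝ) ≤ n := mod_cast hn
  have hn1 : (0 : ℝ) < n - 1 := by linarith
  have hsum : ∑ a, ∑ b ∈ {a}ᶜ, (colWeight j (transvect z a b) : ℝ) ≤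
      (n - 1) * ((n + 1) * colWeight j z) :=
    calc ∑ a, ∑ b ∈ {a}ᶜ, (colWeight j (transvect z a b) : ℝ)
        ≤ ∑ a, ∑ b ∈ ({a} : Finset (Fin n))ᶜ, (colWeight j z + if z a j ≠ 0 then 1 else 0 : ℝ) := by
          gcongr with a _ b _
          exact_mod_cast colWeight_transvect_le j z a b
      _ = (n - 1) * ((n + 1) * colWeight j z) := by
          rw [sum_sum_compl_singleton, sum_add_distrib, sum_boole, sum_const, card_univ,
            Fintype.card_fin, nsmul_eq_mul, add_one_mul]
          rfl
  rw [transQ_mulVec]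
  calc 2⁻¹ * (colWeight j z +
          (∑ a, ∑ b ∈ {a}ᶜ, (colWeight j (transvect z a b) : ℝ)) / (n * (n - 1)))
      ≤ 2⁻¹ * (colWeight j z + (n - 1) * ((n + 1) * colWeight j z) / (n * (n - 1))) := by gcongr
    _ = (1 + 1 / (2 * n)) * colWeight j z := by field_simp; ring

lemma flip_ne_zero_of_mem_Stief {z : TState n k} (hz : z ∈ Stief n k) (j : Fin k) :
    flip z j ≠ 0 :=
  (mem_Stief_iff_linearIndependent_flip.1 hz).ne_zero j

-- Adding to row `i` a row whose `j`-th entry is nonzero turns a zero `(i, j)` entry into a one.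
-- Choosing that row by means of entries that the addition leaves unchanged makes this injective.
open Classical in
lemma card_Stief_entry_eq_zero_le (i : Fin n) (j : Fin k) :
    #{z ∈ {z | z ∈ Stief n k} | z i j = 0} ≤ #{z ∈ {z | z ∈ Stief n k} | z i j ≠ 0} := by
  have : Nonempty (Fin n) := ⟨i⟩
  choose! pivot hpivot using fun (u : Fin n → ZMod 2) (hu : u ≠ 0) => Function.ne_iff.1 hu
  let row (z : TState n k) : Fin n := pivot (Function.update (flip z j) i 0)
  have hrow {z : TState n k} (hz : z ∈ Stief n k) (hzij : z i j = 0) : z (row z) j ≠ 0 := by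
    have hcol : Function.update (flip z j) i 0 = flip z j := by
      rw [← hzij]; exact Function.update_eq_self i (flip z j)
    simp only [row, hcol]
    exact hpivot _ (flip_ne_zero_of_mem_Stief hz j)
  have hrow_ne {z : TState n k} (hz : z ∈ Stief n k) (hzij : z i j = 0) : row z ≠ i :=
    fun h => hrow hz hzij (h ▸ hzij)
  have hrow_transvect (z : TState n k) (a : Fin n) : row (transvect z a i) = row z := by
    refine congrArg pivot (funext fun l => ?_)
    obtain rfl | hl := eq_or_ne l i <;> simp [flip, transvect, *]
  refine card_le_card_of_injOn (fun z => transvect z (row z) i) (fun z hz => ?_)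
    fun z hz w _ hzw => ?_
  · obtain ⟨hzS, hzij⟩ : z ∈ Stief n k ∧ z i j = 0 := by simpa using hz
    have hmem := transvect_mem_Stief (hrow_ne hzS hzij) hzS
    have hentry : transvect z (row z) i i j = z (row z) j := by simp [transvect, hzij]
    simpa [hmem, hentry] using hrow hzS hzij
  · obtain ⟨hzS, hzij⟩ : z ∈ Stief n k ∧ z i j = 0 := by simpa using hz
    have hrow_eq : row z = row w := by
      rw [← hrow_transvect z (row z), ← hrow_transvect w (row w)]; exact congrArg row hzw
    have hne := hrow_ne hzS hzij
    rw [← transvect_transvect z hne, show transvect z (row z) i = transvect w (row w) i from hzw,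
      ← hrow_eq, transvect_transvect w hne]

lemma half_le_unifOn_Stief_dotProduct_colWeight (hS : (Stief n k).Nonempty) (j : Fin k) :
    (n : ℝ) / 2 ≤ unifOn (Stief n k) ⬝ᵥ fun z => (colWeight j z : ℝ) := by
  classical
  have hhalf (i : Fin n) :
      Nat.card (Stief n k) ≤ 2 * #{z ∈ {z | z ∈ Stief n k} | z i j ≠ 0} := by
    rw [natCard_eq_card_filter_mem, ← card_filter_add_card_filter_not (fun z => z i j = 0), two_mul]
    refine Nat.add_le_add_right ?_ _
    exact card_Stief_entry_eq_zero_le i j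
  have hcount : ∑ z with z ∈ Stief n k, colWeight j z =
      ∑ i, #{z ∈ {z | z ∈ Stief n k} | z i j ≠ 0} := by
    simp only [colWeight, hammingNorm, card_filter]
    exact sum_comm
  have htotal : n * Nat.card (Stief n k) ≤ 2 * ∑ z with z ∈ Stief n k, colWeight j z := by
    rw [hcount, mul_sum]
    simpa using sum_le_sum fun i (_ : i ∈ univ) => hhalf i
  rw [unifOn_dotProduct, div_le_div_iff₀ two_pos (mod_cast hS.natCard_pos (Set.toFinite _)),
    mul_comm (∑ z with z ∈ Stief n k, _)]
  exact_mod_cast htotal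

end ColumnWeight

section LowerBound

variable {n k : ℕ}

/-- The `n × k` matrix whose rows are the standard basis vectors followed by zeros, a starting
state all of whose columns have weight one. -/
def stdFrame (h : k ≤ n) : TState n k := flip fun j => Pi.single (Fin.castLE h j) 1

lemma stdFrame_mem_Stief (h : k ≤ n) : stdFrame h ∈ Stief n k :=
  mem_Stief_iff_linearIndependent_flip.2 <|
    (Pi.linearIndependent_single_one (Fin n) (ZMod 2)).comp _ (Fin.castLE_injective h)

lemma colWeight_stdFrame (h : k ≤ n) (j : Fin k) : colWeight j (stdFrame h) = 1 := by
  simp [colWeight, hammingNorm, flip, stdFrame, Pi.single_apply, filter_eq']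

lemma two_pow_le_natCard_Stief (h : k ≤ n) : 2 ^ ((n - 1) * k) ≤ Nat.card (Stief n k) := by
  have hcard : Nat.card (Stief n k) = ∏ i : Fin k, (2 ^ n - 2 ^ (i : ℕ)) := by
    have hindep := card_linearIndependent (K := ZMod 2) (V := Fin n → ZMod 2) (k := k) (by simpa)
    rw [Module.finrank_fin_fun, ZMod.card] at hindep
    rw [← hindep]
    exact Nat.card_congr ((Equiv.piComm _).subtypeEquiv fun _ =>
      mem_Stief_iff_linearIndependent_flip)
  rw [hcard, pow_mul, ← Fin.prod_const]
  refine prod_le_prod' fun i _ => ?_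
  have hin : (i : ℕ) < n := i.2.trans_le h
  have hi : 2 ^ (i : ℕ) ≤ 2 ^ (n - 1) := Nat.pow_le_pow_right two_pos (by omega)
  have hn : 2 ^ n = 2 ^ (n - 1) * 2 := by rw [← pow_succ, Nat.sub_add_cancel (by omega)]
  omega

lemma mul_log_le_of_div_four_le_pow {x : ℝ} (hx : 16 ≤ x) {t : ℕ}
    (h : x / 4 ≤ (1 + 1 / (2 * x)) ^ t) : x * Real.log x ≤ t := by
  have hexp : x / 4 ≤ Real.exp (t / (2 * x)) :=
    calc x / 4 ≤ (1 + 1 / (2 * x)) ^ t := h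
      _ ≤ Real.exp (1 / (2 * x)) ^ t := by
          gcongr
          rw [add_comm]
          exact Real.add_one_le_exp _
      _ = Real.exp (t / (2 * x)) := by rw [← Real.exp_nat_mul, mul_one_div]
  have hlog : Real.log (x / 4) ≤ t / (2 * x) := (Real.log_le_iff_le_exp (by linarith)).2 hexp
  have hdouble : Real.log x ≤ 2 * Real.log (x / 4) :=
    calc Real.log x ≤ Real.log ((x / 4) ^ 2) := Real.log_le_log (by linarith) (by nlinarith)
      _ = 2 * Real.log (x / 4) := by rw [Real.log_pow, Nat.cast_two]
  calc x * Real.log x ≤ x * (2 * (t / (2 * x))) := by gcongr; linarith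
    _ = t := by field_simp

lemma mul_div_log_le_of_two_pow_le_pow (hn : 4 ≤ n) (hk : 1 ≤ k) {t : ℕ}
    (h : 3 / 4 * (2 : ℝ) ^ ((n - 1) * k) ≤ ((n : ℝ) ^ 2) ^ t) :
    1 / 8 * (n * k / Real.log (Real.exp 1 * n)) ≤ t := by
  have hn4 : (4 : ℝ) ≤ n := mod_cast hn
  have hk1 : (1 : ℝ) ≤ k := mod_cast hk
  have hlog2 := Real.log_two_gt_d9
  have hlog_nonneg : 0 ≤ Real.log n := Real.log_nonneg (by linarith)
  have hlog : Real.log (Real.exp 1 * n) = 1 + Real.log n := by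
    rw [Real.log_mul (by positivity) (by positivity), Real.log_exp]
  have hweak : (2 : ℝ)⁻¹ * 2 ^ ((n - 1) * k) ≤ ((n : ℝ) ^ 2) ^ t :=
    le_trans (by gcongr; norm_num) h
  have hexponents : ((n - 1) * k - 1) * Real.log 2 ≤ t * (2 * Real.log n) := by
    have := Real.log_le_log (by positivity) hweak
    rw [Real.log_mul (by norm_num) (by positivity), Real.log_inv, Real.log_pow, Real.log_pow,
      Real.log_pow] at this
    push_cast [Nat.cast_sub (show 1 ≤ n by omega)] at this
    linarith
  have hhalf : (n : ℝ) * k / 2 ≤ (n - 1) * k - 1 := by nlinarith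
  have hquarter : (n : ℝ) * k / 4 ≤ t * (2 * Real.log n) := by nlinarith
  rw [hlog, ← mul_div_assoc, div_le_iff₀ (by linarith)]
  nlinarith [t.cast_nonneg (α := ℝ)]

lemma mul_log_le_of_tvDist_le (hn : 16 ≤ n) (hk : 1 ≤ k) (hkn : k ≤ n) {t : ℕ}
    (h : tvDist ((transQ n k ^ t) (stdFrame hkn)) (unifOn (Stief n k)) ≤ 1 / 4) :
    n * Real.log n ≤ t := by
  have hn16 : (16 : ℝ) ≤ n := mod_cast hn
  have hQ := transQ_mem_rowStochastic (by omega : 2 ≤ n) k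
  have hS : (Stief n k).Nonempty := ⟨_, stdFrame_mem_Stief hkn⟩
  let j : Fin k := ⟨0, hk⟩
  let W : TState n k → ℝ := fun z => colWeight j z
  have hW (z : TState n k) : W z ≤ n := Nat.cast_le.2 (colWeight_le j z)
  have hgrowth : (transQ n k ^ t) (stdFrame hkn) ⬝ᵥ W ≤ (1 + 1 / (2 * n)) ^ t := by
    have := pow_mulVec_le hQ.1 (by positivity) (transQ_mulVec_colWeight_le (by omega) j) t
      (stdFrame hkn)
    rwa [colWeight_stdFrame, Nat.cast_one, mul_one] at this
  have hstat : (n : ℝ) / 2 ≤ unifOn (Stief n k) ⬝ᵥ W :=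
    half_le_unifOn_Stief_dotProduct_colWeight hS j
  have htest := dotProduct_sub_dotProduct_le_tvDist (f := (n : ℝ)⁻¹ • W)
    ((row_mem_stdSimplex (pow_mem hQ t) (stdFrame hkn)).2.trans (unifOn_mem_stdSimplex hS).2.symm)
    fun z => ⟨by simp only [Pi.smul_apply, smul_eq_mul]; positivity,
      inv_mul_le_one_of_le₀ (hW z) (by positivity)⟩
  rw [dotProduct_smul, dotProduct_smul, ← smul_sub, smul_eq_mul, inv_mul_eq_div] at htest
  have hdiff := (div_le_iff₀ (by linarith)).1 (htest.trans h)
  exact mul_log_le_of_div_four_le_pow hn16 (by linarith)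

lemma mul_div_log_le_of_tvDist_le (hn : 4 ≤ n) (hk : 1 ≤ k) (hkn : k ≤ n) {t : ℕ}
    (h : tvDist ((transQ n k ^ t) (stdFrame hkn)) (unifOn (Stief n k)) ≤ 1 / 4) :
    1 / 8 * (n * k / Real.log (Real.exp 1 * n)) ≤ t := by
  have hQ := transQ_mem_rowStochastic (by omega : 2 ≤ n) k
  have hS : (Stief n k).Nonempty := ⟨_, stdFrame_mem_Stief hkn⟩
  have hsupp := card_row_support_pow_le (card_transQ_row_support_le (by omega)) t (stdFrame hkn)
  have htest := one_sub_card_support_div_le_tvDist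
    (row_mem_stdSimplex (pow_mem hQ t) (stdFrame hkn)).2 hS
  refine mul_div_log_le_of_two_pow_le_pow hn hk ?_
  have hcard : 3 / 4 * (Nat.card (Stief n k) : ℝ) ≤
      #{w | (transQ n k ^ t) (stdFrame hkn) w ≠ 0} :=
    (le_div_iff₀ (mod_cast hS.natCard_pos (Set.toFinite _))).1 (by linarith)
  calc 3 / 4 * (2 : ℝ) ^ ((n - 1) * k) ≤ 3 / 4 * Nat.card (Stief n k) := by
        gcongr; exact_mod_cast two_pow_le_natCard_Stief hkn
    _ ≤ #{w | (transQ n k ^ t) (stdFrame hkn) w ≠ 0} := hcard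
    _ ≤ ((n : ℝ) ^ 2) ^ t := mod_cast hsupp

end LowerBound

theorem stmt1 :
    ∃ c : ℝ, 0 < c ∧ ∃ N : ℕ, ∀ n : ℕ, N ≤ n → ∀ k : ℕ, 1 ≤ k → k ≤ n →
      c * max ((n : ℝ) * Real.log n) ((n : ℝ) * k / Real.log (Real.exp 1 * n)) ≤
        (mixTime (transQ n k) (unifOn (Stief n k)) (Stief n k) : ℝ) := by
  refine ⟨1 / 8, by norm_num, 16, fun n hn k hk hkn => ?_⟩
  have hstart := stdFrame_mem_Stief hkn
  have hmix := tvDist_pow_mixTime_le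
    (exists_forall_tvDist_transQ_pow_le (by omega) ⟨_, hstart⟩ (by norm_num)) hstart
  have hnlogn := mul_log_le_of_tvDist_le hn hk hkn hmix
  have hentropy := mul_div_log_le_of_tvDist_le (by omega) hk hkn hmix
  rw [mul_max_of_nonneg _ _ (by norm_num)]
  refine max_le (le_trans (mul_le_of_le_one_left ?_ (by norm_num)) hnlogn) hentropy
  exact mul_nonneg n.cast_nonneg (Real.log_natCast_nonneg n)
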